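/- arXiv:1209.3494 — 9 statements merged into one kernel-verified Lean document; each statement's English description precedes it below -/
import Mathlib

section
/- Let 0 < p < 1 and let α, β be real numbers with α ≥ β > 0 and α² + β² = 1. Then the fidelity (fully entangled fraction) of the two-qubit state ρ(χ(α), Λ_p) obtained by sending the second qubit of |χ(α)⟩ = α|00⟩ + β|11⟩ through the amplitude damping channel Λ_p equals F(ρ(χ(α), Λ_p)) = (1 + 2αβ√(1−p) − pβ²)/2. -/
open Matrix Complex
open scoped Kronecker ComplexOrder

/-- Index type for two qubits: the product basis of ℂ² ⊗ ℂ². -/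
abbrev Q2 := Fin 2 × Fin 2

/-- Kraus operator `M₀` of the amplitude damping channel. -/
noncomputable def M0 (p : ℝ) : Matrix (Fin 2) (Fin 2) ℂ :=
  !![1, 0; 0, (Real.sqrt (1 - p) : ℂ)]

/-- Kraus operator `M₁` of the amplitude damping channel. -/
noncomputable def M1 (p : ℝ) : Matrix (Fin 2) (Fin 2) ℂ :=
  !![0, (Real.sqrt p : ℂ); 0, 0]

/-- Outer product `|ψ⟩⟨ψ|` of a two-qubit vector. -/
noncomputable def outer (ψ : Q2 → ℂ) : Matrix Q2 Q2 ℂ :=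
  Matrix.of fun i j => ψ i * star (ψ j)

/-- The state `ρ(χ, Λ_p)` obtained by applying the amplitude damping channel
with parameter `p` to the second qubit: `Σᵢ (I ⊗ Mᵢ) ρ (I ⊗ Mᵢ)†`. -/
noncomputable def ampDamp (p : ℝ) (ρ : Matrix Q2 Q2 ℂ) : Matrix Q2 Q2 ℂ :=
  ((1 : Matrix (Fin 2) (Fin 2) ℂ) ⊗ₖ M0 p) * ρ * ((1 : Matrix (Fin 2) (Fin 2) ℂ) ⊗ₖ M0 p)ᴴ +
  ((1 : Matrix (Fin 2) (Fin 2) ℂ) ⊗ₖ M1 p) * ρ * ((1 : Matrix (Fin 2) (Fin 2) ℂ) ⊗ₖ M1 p)ᴴ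

/-- The pure state `|χ⟩ = a|00⟩ + b|11⟩`. -/
noncomputable def ketChi (a b : ℝ) : Q2 → ℂ :=
  fun ij => if ij = ((0 : Fin 2), (0 : Fin 2)) then (a : ℂ)
    else if ij = ((1 : Fin 2), (1 : Fin 2)) then (b : ℂ) else 0

/-- The maximally entangled state `|Φ⁺⟩ = (|00⟩ + |11⟩)/√2`. -/
noncomputable def phiPlus : Q2 → ℂ := ketChi (Real.sqrt 2)⁻¹ (Real.sqrt 2)⁻¹

/-- The optimal transmitted state `|χ₀⟩ = (1/√(2−p))|00⟩ + √((1−p)/(2−p))|11⟩`. -/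
noncomputable def ketChi0 (p : ℝ) : Q2 → ℂ :=
  ketChi (Real.sqrt (1 / (2 - p))) (Real.sqrt ((1 - p) / (2 - p)))

/-- Reduced density matrix on the first qubit (trace out the second qubit). -/
noncomputable def trSecond (ρ : Matrix Q2 Q2 ℂ) : Matrix (Fin 2) (Fin 2) ℂ :=
  Matrix.of fun i k => ∑ j : Fin 2, ρ (i, j) (k, j)

/-- Reduced density matrix on the second qubit (trace out the first qubit). -/
noncomputable def trFirst (ρ : Matrix Q2 Q2 ℂ) : Matrix (Fin 2) (Fin 2) ℂ :=
  Matrix.of fun j l => ∑ i : Fin 2, ρ (i, j) (i, l)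

/-- A unit vector `ψ ∈ ℂ²⊗ℂ²` is maximally entangled if both reduced density
matrices of `|ψ⟩⟨ψ|` equal `I/2`. -/
def MaxEnt (ψ : Q2 → ℂ) : Prop :=
  (∑ ij : Q2, Complex.normSq (ψ ij)) = 1 ∧
  trSecond (outer ψ) = (1 / 2 : ℂ) • (1 : Matrix (Fin 2) (Fin 2) ℂ) ∧
  trFirst (outer ψ) = (1 / 2 : ℂ) • (1 : Matrix (Fin 2) (Fin 2) ℂ)

/-- The real expectation value `⟨ψ|ρ|ψ⟩`. -/
noncomputable def expectation (ψ : Q2 → ℂ) (ρ : Matrix Q2 Q2 ℂ) : ℝ :=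
  (∑ i : Q2, ∑ j : Q2, star (ψ i) * ρ i j * ψ j).re

/-- Fidelity (fully entangled fraction): `F(ρ) = sup_Ψ ⟨Ψ|ρ|Ψ⟩` over maximally
entangled unit vectors `Ψ`. -/
noncomputable def Fid (ρ : Matrix Q2 Q2 ℂ) : ℝ :=
  sSup {x : ℝ | ∃ ψ : Q2 → ℂ, MaxEnt ψ ∧ x = expectation ψ ρ}

/-- Partial transposition on the second qubit: `(ρ^Γ)_{(i,j),(k,l)} = ρ_{(i,l),(k,j)}`. -/
def ptrans (ρ : Matrix Q2 Q2 ℂ) : Matrix Q2 Q2 ℂ :=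
  Matrix.of fun ij kl => ρ (ij.1, kl.2) (kl.1, ij.2)

/-- The Verstraete–Verschelde maximum achievable fidelity under trace-preserving LOCC,
as the value of the semidefinite program
`F*(ρ) = sup { 1/2 − Tr(X ρ^Γ) : X Hermitian, 0 ≤ X ≤ I, −I/2 ≤ X^Γ ≤ I/2 }`. -/
noncomputable def FStar (ρ : Matrix Q2 Q2 ℂ) : ℝ :=
  sSup {x : ℝ | ∃ X : Matrix Q2 Q2 ℂ,
    X.IsHermitian ∧ X.PosSemidef ∧ ((1 : Matrix Q2 Q2 ℂ) - X).PosSemidef ∧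
    (ptrans X + (1 / 2 : ℂ) • (1 : Matrix Q2 Q2 ℂ)).PosSemidef ∧
    ((1 / 2 : ℂ) • (1 : Matrix Q2 Q2 ℂ) - ptrans X).PosSemidef ∧
    x = 1 / 2 - ((X * ptrans ρ).trace).re}

/-- The Pauli matrix `σ_y`. -/
noncomputable def sigY : Matrix (Fin 2) (Fin 2) ℂ := !![0, -Complex.I; Complex.I, 0]

/-- The matrix `ρ (σ_y⊗σ_y) ρ̄ (σ_y⊗σ_y)` whose eigenvalues define the concurrence. -/
noncomputable def Rmat (ρ : Matrix Q2 Q2 ℂ) : Matrix Q2 Q2 ℂ :=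
  ρ * (sigY ⊗ₖ sigY) * ρ.map (starRingEnd ℂ) * (sigY ⊗ₖ sigY)

/-- `c` is the concurrence of `ρ`: `c = max(0, λ₁ − λ₂ − λ₃ − λ₄)` where
`λ₁ ≥ λ₂ ≥ λ₃ ≥ λ₄ ≥ 0` are the square roots of the eigenvalues (with multiplicity)
of `ρ (σ_y⊗σ_y) ρ̄ (σ_y⊗σ_y)`. -/
def IsConcurrence (ρ : Matrix Q2 Q2 ℂ) (c : ℝ) : Prop :=
  ∃ lam : Fin 4 → ℝ,
    (∀ i j : Fin 4, i ≤ j → lam j ≤ lam i) ∧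
    (∀ i : Fin 4, 0 ≤ lam i) ∧
    (Rmat ρ).charpoly = ∏ i : Fin 4, (Polynomial.X - Polynomial.C ((lam i : ℂ) ^ 2)) ∧
    c = max 0 (lam 0 - lam 1 - lam 2 - lam 3)

/-- `μ` is an eigenvalue of the matrix `A`. -/
def IsEigenvalue (A : Matrix Q2 Q2 ℂ) (μ : ℂ) : Prop :=
  ∃ v : Q2 → ℂ, v ≠ 0 ∧ A *ᵥ v = μ • v

theorem expectation_formula (p α β : ℝ) (hp0 : 0 < p) (ψ : Q2 → ℂ) :
    expectation ψ (ampDamp p (outer (ketChi α β))) =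
      (α * (ψ (0,0)).re + Real.sqrt (1 - p) * β * (ψ (1,1)).re) ^ 2
      + (α * (ψ (0,0)).im + Real.sqrt (1 - p) * β * (ψ (1,1)).im) ^ 2
      + p * β ^ 2 * ((ψ (1,0)).re ^ 2 + (ψ (1,0)).im ^ 2) := by
  have hs : Real.sqrt p ^ 2 = p := Real.sq_sqrt hp0.le
  simp [expectation, ampDamp, outer, ketChi, M0, M1, Matrix.mul_apply, Fintype.sum_prod_type,
    Fin.sum_univ_two, Matrix.kroneckerMap_apply, Matrix.conjTranspose_apply]
  generalize Real.sqrt p = q at *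
  subst hs
  ring

theorem maxEnt_diag (ψ : Q2 → ℂ) (h : MaxEnt ψ) :
    (ψ (1,1)).re ^ 2 + (ψ (1,1)).im ^ 2 = (ψ (0,0)).re ^ 2 + (ψ (0,0)).im ^ 2 ∧
    (ψ (1,0)).re ^ 2 + (ψ (1,0)).im ^ 2 = 1 / 2 - ((ψ (0,0)).re ^ 2 + (ψ (0,0)).im ^ 2) := by
  obtain ⟨-, h2, h3⟩ := h
  have a := congrArg Complex.re (congrFun (congrFun h2 1) 1)
  have b := congrArg Complex.re (congrFun (congrFun h3 0) 0)
  simp [trSecond, trFirst, outer, Fin.sum_univ_two] at a b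
  constructor <;> nlinarith

/-- For `0 < p < 1` and `α ≥ β > 0` with `α² + β² = 1`, the fidelity of
the state obtained by sending the second qubit of `α|00⟩ + β|11⟩` through the
amplitude damping channel `Λ_p` equals `(1 + 2αβ√(1−p) − pβ²)/2`. -/
theorem fidelity_ampDamp_chi (p α β : ℝ) (hp0 : 0 < p) (hp1 : p < 1)
    (hba : β ≤ α) (hb : 0 < β) (hnorm : α ^ 2 + β ^ 2 = 1) :
    Fid (ampDamp p (outer (ketChi α β))) =
      (1 + 2 * α * β * Real.sqrt (1 - p) - p * β ^ 2) / 2 := by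
  have hs0 : 0 ≤ Real.sqrt (1 - p) := Real.sqrt_nonneg _
  have hs : Real.sqrt (1 - p) ^ 2 = 1 - p := Real.sq_sqrt (by linarith)
  apply IsGreatest.csSup_eq
  constructor
  · have h2 : (Real.sqrt 2)⁻¹ * (Real.sqrt 2)⁻¹ = (1 / 2 : ℝ) := by
      rw [← mul_inv, Real.mul_self_sqrt (by norm_num)]; norm_num
    have h2c : ((Real.sqrt 2 : ℂ))⁻¹ * ((Real.sqrt 2 : ℂ))⁻¹ = 2⁻¹ := by
      have := congrArg (fun x : ℝ => (x : ℂ)) h2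
      push_cast at this
      rw [this]; norm_num
    refine ⟨phiPlus, ⟨?_, ?_, ?_⟩, ?_⟩
    · simp [phiPlus, ketChi, Fintype.sum_prod_type, Fin.sum_univ_two, Complex.normSq_apply]
      nlinarith [Real.mul_self_sqrt (show (0 : ℝ) ≤ 2 by norm_num), h2]
    · ext i j
      fin_cases i <;> fin_cases j <;>
        simp [trSecond, outer, phiPlus, ketChi, Fin.sum_univ_two, h2c]
    · ext i j
      fin_cases i <;> fin_cases j <;>
        simp [trFirst, outer, phiPlus, ketChi, Fin.sum_univ_two, h2c]
    · rw [expectation_formula p α β hp0]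
      have e0 : phiPlus (0,0) = (((Real.sqrt 2)⁻¹ : ℝ) : ℂ) := by simp [phiPlus, ketChi]
      have e1 : phiPlus (1,1) = (((Real.sqrt 2)⁻¹ : ℝ) : ℂ) := by simp [phiPlus, ketChi]
      have e2 : phiPlus (1,0) = 0 := by simp [phiPlus, ketChi]
      rw [e0, e1, e2]
      simp only [Complex.ofReal_re, Complex.ofReal_im, Complex.zero_re, Complex.zero_im]
      generalize Real.sqrt (1 - p) = s at *
      generalize (Real.sqrt 2)⁻¹ = t at *
      linear_combination (-(α + s * β) ^ 2) * h2 - (1 / 2) * hnorm - (β ^ 2 / 2) * hs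
  · rintro x ⟨ψ, hψ, rfl⟩
    obtain ⟨h1, h2⟩ := maxEnt_diag ψ hψ
    rw [expectation_formula p α β hp0, h2]
    have hx : 0 ≤ 1 / 2 - ((ψ (0,0)).re ^ 2 + (ψ (0,0)).im ^ 2) := by rw [← h2]; positivity
    generalize Real.sqrt (1 - p) = s at *
    generalize (ψ (0,0)).re = a at *
    generalize (ψ (0,0)).im = b at *
    generalize (ψ (1,1)).re = c at *
    generalize (ψ (1,1)).im = d at *
    have ha : 0 < α := lt_of_lt_of_le hb hba
    have k0 : 0 ≤ α * (s * β) := by positivity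
    have k1 : 0 ≤ α * (s * β) * ((a - c) ^ 2 + (b - d) ^ 2) := by positivity
    have k2 : p * β ^ 2 ≤ (α + s * β) ^ 2 := by
      have : 0 ≤ (s * β) ^ 2 := sq_nonneg _
      nlinarith [mul_pos hb hb, mul_le_mul hba hba hb.le ha.le]
    have k3 := mul_nonneg (sub_nonneg.2 k2) hx
    have k4 : (1 + 2 * α * β * s - p * β ^ 2) / 2 = (α + s * β) ^ 2 / 2 := by
      linear_combination - (1 / 2) * hnorm - (β ^ 2 / 2) * hs
    have k5 : (α * a + s * β * c) ^ 2 + (α * b + s * β * d) ^ 2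
        = (α + s * β) ^ 2 * (a ^ 2 + b ^ 2) - α * (s * β) * ((a - c) ^ 2 + (b - d) ^ 2) := by
      linear_combination (s ^ 2 * β ^ 2 + α * s * β) * h1
    rw [k4, k5]
    linarith
end

section
/- Let 0 < p < 1 and let α, β be real numbers with α ≥ β > 0 and α² + β² = 1. Then the concurrence of the state ρ(χ(α), Λ_p) obtained by sending the second qubit of |χ(α)⟩ = α|00⟩ + β|11⟩ through the amplitude damping channel Λ_p equals C(ρ(χ(α), Λ_p)) = 2αβ√(1−p). -/
open Matrix Complex
open scoped Kronecker ComplexOrder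

/-- The ordered product basis. -/
def basisIdx : Fin 4 → Fin 2 × Fin 2 := ![(0, 0), (0, 1), (1, 0), (1, 1)]

theorem basisIdx_bijective : Function.Bijective basisIdx := by decide

/-- Explicit form of the characteristic matrix in the ordered product basis. -/
theorem charpoly_eval_aux (p α β : ℝ) (t : ℂ) :
    (Rmat (ampDamp p (outer (ketChi α β)))).charpoly.eval t =
      t ^ 3 * (t - ((2 * α * β * Real.sqrt (1 - p) : ℝ) : ℂ) ^ 2) := by
  have hR : (Rmat (ampDamp p (outer (ketChi α β)))).submatrix
      basisIdx basisIdx =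
      !![2 * (α * β * Real.sqrt (1 - p) : ℂ) ^ 2, 0, 0, 2 * (α : ℂ) ^ 3 * β * Real.sqrt (1 - p);
         0, 0, 0, 0; 0, 0, 0, 0;
         2 * (α : ℂ) * β ^ 3 * (Real.sqrt (1 - p) : ℂ) ^ 3, 0, 0,
           2 * (α * β * Real.sqrt (1 - p) : ℂ) ^ 2] := by
    have hρ : ampDamp p (outer (ketChi α β)) = Matrix.of fun i j : Q2 =>
        (if i = (0, 0) then (α : ℂ) else if i = (1, 1) then (β : ℂ) * Real.sqrt (1 - p) else 0) *
        (if j = (0, 0) then (α : ℂ) else if j = (1, 1) then (β : ℂ) * Real.sqrt (1 - p) else 0) +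
        (if i = (1, 0) then (β : ℂ) * Real.sqrt p else 0) *
        (if j = (1, 0) then (β : ℂ) * Real.sqrt p else 0) := by
      ext ⟨i1, i2⟩ ⟨j1, j2⟩
      fin_cases i1 <;> fin_cases i2 <;> fin_cases j1 <;> fin_cases j2 <;>
        simp [ampDamp, outer, ketChi, M0, M1, Matrix.mul_apply, Fintype.sum_prod_type,
          Fin.sum_univ_two, Matrix.kroneckerMap_apply, Matrix.one_apply] <;> ring
    rw [hρ]
    ext i j
    fin_cases i <;> fin_cases j <;>
      simp [Rmat, sigY, Matrix.mul_apply, Fintype.sum_prod_type, basisIdx,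
          Fin.sum_univ_two, Matrix.kroneckerMap_apply] <;> ring
  have h1 : (Rmat (ampDamp p (outer (ketChi α β)))).charpoly =
      ((Rmat (ampDamp p (outer (ketChi α β)))).submatrix
      basisIdx
      basisIdx).charpoly :=
    (Matrix.charpoly_reindex (Equiv.ofBijective basisIdx basisIdx_bijective).symm _).symm
  rw [h1, hR, Matrix.eval_charpoly]
  simp [Matrix.det_succ_row_zero, Fin.sum_univ_succ, Matrix.scalar_apply, Fin.succAbove]
  ring

/-- For `0 < p < 1` and `α ≥ β > 0` with `α² + β² = 1`, the concurrence of
the state obtained by sending the second qubit of `α|00⟩ + β|11⟩` through the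
amplitude damping channel `Λ_p` equals `2αβ√(1−p)`. -/
theorem concurrence_ampDamp_chi (p α β : ℝ) (hp0 : 0 < p) (hp1 : p < 1)
    (hba : β ≤ α) (hb : 0 < β) (hnorm : α ^ 2 + β ^ 2 = 1) :
    ∀ c : ℝ, IsConcurrence (ampDamp p (outer (ketChi α β))) c →
      c = 2 * α * β * Real.sqrt (1 - p) := by
  rintro c ⟨lam, hanti, hnn, hchar, rfl⟩
  have hk : 0 < 2 * α * β * Real.sqrt (1 - p) := by
    have : 0 < Real.sqrt (1 - p) := Real.sqrt_pos.mpr (by linarith)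
    have : 0 < α := lt_of_lt_of_le hb hba
    positivity
  have key : ∀ t : ℝ, t ^ 3 * (t - (2 * α * β * Real.sqrt (1 - p)) ^ 2) =
      (t - lam 0 ^ 2) * (t - lam 1 ^ 2) * (t - lam 2 ^ 2) * (t - lam 3 ^ 2) := by
    intro t
    have h := charpoly_eval_aux p α β (t : ℂ)
    rw [hchar] at h
    simp only [Fin.prod_univ_four, Polynomial.eval_mul, Polynomial.eval_sub,
      Polynomial.eval_X, Polynomial.eval_C] at h
    exact_mod_cast h.symm
  generalize 2 * α * β * Real.sqrt (1 - p) = k at hk key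
  have h01 := hanti 0 1 (by decide)
  have h12 := hanti 1 2 (by decide)
  have h23 := hanti 2 3 (by decide)
  have hv : ∀ x : ℝ, 0 ≤ x → x ^ 2 = 0 ∨ x ^ 2 - k ^ 2 = 0 → x = 0 ∨ x = k := by
    rintro x hx (h | h)
    · left; exact pow_eq_zero_iff (two_ne_zero) |>.mp h
    · right; nlinarith
  have hz : ∀ i, lam i = 0 ∨ lam i = k := by
    intro i
    have h := key (lam i ^ 2)
    have h0 : (lam i ^ 2) ^ 3 * (lam i ^ 2 - k ^ 2) = 0 := by
      rw [h]; fin_cases i <;> simp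
    rcases mul_eq_zero.mp h0 with h' | h'
    · exact hv _ (hnn i) (Or.inl (pow_eq_zero_iff three_ne_zero |>.mp h'))
    · exact hv _ (hnn i) (Or.inr h')
  have hu := key (-k ^ 2)
  have hk8 : 0 < k ^ 8 := by positivity
  rcases hz 0 with a | a <;> rcases hz 1 with b | b <;> rcases hz 2 with c | c <;>
    rcases hz 3 with d | d <;> rw [a, b, c, d] at hu ⊢ <;>
    first
    | (exfalso; linarith)
    | (exfalso; ring_nf at hu; linarith)
    | (simp; linarith)
end

section
/- Let 0 < p < 1 and let |Φ⁺⟩ = (|00⟩ + |11⟩)/√2. Then the fidelity of ρ(Φ⁺, Λ_p) satisfies F(ρ(Φ⁺, Λ_p)) ≤ 1/2 if and only if p ≥ 2(√2 − 1). -/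
open Matrix Complex
open scoped Kronecker ComplexOrder

lemma kron_expect_aux (p : ℝ) (hp0 : 0 < p) (hp1 : p < 1) (ψ : Q2 → ℂ) :
    expectation ψ (ampDamp p (outer phiPlus)) =
      Complex.normSq (ψ (0, 0) + (Real.sqrt (1 - p) : ℂ) * ψ (1, 1)) / 2
        + p / 2 * Complex.normSq (ψ (1, 0)) := by
  have h2 : (Real.sqrt 2)⁻¹ * (Real.sqrt 2)⁻¹ = 1 / 2 := by
    rw [← mul_inv, Real.mul_self_sqrt (by norm_num)]; norm_num
  have hp : Real.sqrt p * Real.sqrt p = p := Real.mul_self_sqrt hp0.le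
  have hk : expectation ψ (ampDamp p (outer phiPlus)) =
      ((Real.sqrt 2)⁻¹ * (Real.sqrt 2)⁻¹) *
       (Complex.normSq (ψ (0, 0) + (Real.sqrt (1 - p) : ℂ) * ψ (1, 1))
        + (Real.sqrt p * Real.sqrt p) * Complex.normSq (ψ (1, 0))) := by
    simp [expectation, ampDamp, outer, phiPlus, ketChi, M0, M1, Matrix.mul_apply,
      Fintype.sum_prod_type, Fin.sum_univ_two, Matrix.one_apply, Complex.normSq_apply,
      Matrix.kroneckerMap_apply, -Complex.ofReal_inv]
    ring
  rw [hk, h2, hp]; ring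

lemma maxEnt_norms (ψ : Q2 → ℂ) (h : MaxEnt ψ) :
    Complex.normSq (ψ (0, 0)) = Complex.normSq (ψ (1, 1)) ∧
    Complex.normSq (ψ (0, 0)) + Complex.normSq (ψ (1, 0)) = 1 / 2 := by
  obtain ⟨_, h2, h3⟩ := h
  have a := congrArg Complex.re (congrFun (congrFun h2 1) 1)
  have b := congrArg Complex.re (congrFun (congrFun h3 0) 0)
  simp [trSecond, trFirst, outer, Fin.sum_univ_two] at a b
  simp only [Complex.normSq_apply]
  constructor <;> linarith

lemma expect_le (p : ℝ) (hp0 : 0 < p) (hp1 : p < 1) (ψ : Q2 → ℂ) (h : MaxEnt ψ) :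
    expectation ψ (ampDamp p (outer phiPlus)) ≤ (1 + Real.sqrt (1 - p)) ^ 2 / 4 := by
  rw [kron_expect_aux p hp0 hp1]
  obtain ⟨h1, h2⟩ := maxEnt_norms ψ h
  have hs := Real.sqrt_nonneg (1 - p)
  set s := Real.sqrt (1 - p)
  have hc := Complex.normSq_nonneg (ψ (1, 0))
  have key : Complex.normSq (ψ (0, 0) + (s : ℂ) * ψ (1, 1))
      ≤ (1 + s) ^ 2 * Complex.normSq (ψ (0, 0)) := by
    simp only [Complex.normSq_apply] at h1 ⊢
    simp
    nlinarith [mul_nonneg hs (add_nonneg (sq_nonneg ((ψ (0, 0)).re - (ψ (1, 1)).re))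
      (sq_nonneg ((ψ (0, 0)).im - (ψ (1, 1)).im))), congrArg (fun x => s * x) h1,
      congrArg (fun x => s ^ 2 * x) h1]
  have hq : p ≤ (1 + s) ^ 2 := by nlinarith
  nlinarith [mul_nonneg (sub_nonneg.2 hq) hc]

lemma maxEnt_phiPlus : MaxEnt phiPlus := by
  have h2 : (Real.sqrt 2)⁻¹ * (Real.sqrt 2)⁻¹ = 1 / 2 := by
    rw [← mul_inv, Real.mul_self_sqrt (by norm_num)]; norm_num
  have h2c : ((Real.sqrt 2 : ℝ) : ℂ)⁻¹ * ((Real.sqrt 2 : ℝ) : ℂ)⁻¹ = 2⁻¹ := by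
    have := congrArg (fun x : ℝ => (x : ℂ)) h2
    push_cast at this
    rw [this]; norm_num
  refine ⟨?_, ?_, ?_⟩
  · simp only [phiPlus, ketChi, Fintype.sum_prod_type, Fin.sum_univ_two]
    norm_num [Complex.normSq_ofReal, h2, -Complex.ofReal_inv]
  · ext i j
    fin_cases i <;> fin_cases j <;>
      simp [trSecond, outer, phiPlus, ketChi, Fin.sum_univ_two, h2c]
  · ext i j
    fin_cases i <;> fin_cases j <;>
      simp [trFirst, outer, phiPlus, ketChi, Fin.sum_univ_two, h2c]

lemma expect_phiPlus (p : ℝ) (hp0 : 0 < p) (hp1 : p < 1) :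
    expectation phiPlus (ampDamp p (outer phiPlus)) = (1 + Real.sqrt (1 - p)) ^ 2 / 4 := by
  have h2 : (Real.sqrt 2)⁻¹ * (Real.sqrt 2)⁻¹ = 1 / 2 := by
    rw [← mul_inv, Real.mul_self_sqrt (by norm_num)]; norm_num
  rw [kron_expect_aux p hp0 hp1]
  simp [phiPlus, ketChi, Complex.normSq_apply, -Complex.ofReal_inv]
  linear_combination (1 + Real.sqrt (1 - p)) ^ 2 / 2 * h2

lemma fid_eq (p : ℝ) (hp0 : 0 < p) (hp1 : p < 1) :
    Fid (ampDamp p (outer phiPlus)) = (1 + Real.sqrt (1 - p)) ^ 2 / 4 := by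
  apply IsGreatest.csSup_eq
  refine ⟨⟨phiPlus, maxEnt_phiPlus, (expect_phiPlus p hp0 hp1).symm⟩, ?_⟩
  rintro x ⟨ψ, hψ, rfl⟩
  exact expect_le p hp0 hp1 ψ hψ

/-- For `0 < p < 1`, the fidelity of `ρ(Φ⁺, Λ_p)` satisfies
`F(ρ(Φ⁺, Λ_p)) ≤ 1/2` if and only if `p ≥ 2(√2 − 1)`. -/
theorem fidelity_phiPlus_le_half_iff (p : ℝ) (hp0 : 0 < p) (hp1 : p < 1) :
    Fid (ampDamp p (outer phiPlus)) ≤ 1 / 2 ↔ 2 * (Real.sqrt 2 - 1) ≤ p := by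
  rw [fid_eq p hp0 hp1]
  have hs := Real.sqrt_nonneg (1 - p)
  have hs2 : Real.sqrt (1 - p) ^ 2 = 1 - p := Real.sq_sqrt (by linarith)
  have ht : Real.sqrt 2 ^ 2 = 2 := Real.sq_sqrt (by norm_num)
  have ht1 : 1 < Real.sqrt 2 := by
    rw [Real.lt_sqrt (by norm_num)]; norm_num
  set s := Real.sqrt (1 - p)
  set t := Real.sqrt 2
  constructor
  · intro h
    have : 1 + s ≤ t := by
      by_contra hc
      push Not at hc
      nlinarith
    nlinarith
  · intro h
    have : s ≤ t - 1 := by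
      by_contra hc
      push Not at hc
      nlinarith
    nlinarith
end

section
/- (Proposition 1) Let 0 < p < 1 and let |Φ⁺⟩ = (|00⟩ + |11⟩)/√2. Then the maximum achievable fidelity under trace-preserving LOCC of the state ρ(Φ⁺, Λ_p) satisfies F*(ρ(Φ⁺, Λ_p)) < 1 − p/2. In particular, sending a maximally entangled state through the amplitude damping channel followed by optimal local post-processing yields strictly smaller fidelity than the maximum pre-processed fidelity F_max = 1 − p/2. -/
open Matrix Complex
open scoped Kronecker ComplexOrder

/-- Quadratic form of a PSD matrix on a real vector supported on two indices. -/
lemma psd_two {A : Matrix Q2 Q2 ℂ} (hA : A.PosSemidef) (i j : Q2) (α β : ℝ) :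
    0 ≤ α ^ 2 * (A i i).re + β ^ 2 * (A j j).re + 2 * α * β * (A i j).re := by
  have h := (hA.submatrix ![i, j]).dotProduct_mulVec_nonneg ![(α : ℂ), (β : ℂ)]
  have h2 := (Complex.le_def.1 h).1
  have hji : (A j i).re = (A i j).re := by
    rw [← hA.1.apply j i]; simp
  simp [Matrix.mulVec, dotProduct, Fin.sum_univ_two, hji] at h2
  nlinarith [h2]

/-- The trace functional for the damped maximally entangled state. -/
lemma trace_formula (p : ℝ) (hp0 : 0 < p) (hp1 : p < 1) (X : Matrix Q2 Q2 ℂ)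
    (hX : X.IsHermitian) :
    ((X * ptrans (ampDamp p (outer phiPlus))).trace).re =
      (X (0,0) (0,0)).re / 2 + (1 - p) / 2 * (X (1,1) (1,1)).re
        + p / 2 * (X (1,0) (1,0)).re + Real.sqrt (1 - p) * (X (0,1) (1,0)).re := by
  have hji : (X (1,0) (0,1)).re = (X (0,1) (1,0)).re := by
    rw [← hX.apply (1,0) (0,1)]; simp
  have e1 : (Real.sqrt 2)⁻¹ * (Real.sqrt 2)⁻¹ = 1 / 2 := by
    rw [← mul_inv, Real.mul_self_sqrt (by norm_num)]; norm_num
  have e2 : Real.sqrt (1 - p) * Real.sqrt (1 - p) = 1 - p :=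
    Real.mul_self_sqrt (by linarith)
  have e3 : Real.sqrt p * Real.sqrt p = p := Real.mul_self_sqrt hp0.le
  have key : ptrans (ampDamp p (outer phiPlus)) = Matrix.of fun i j : Q2 =>
      if i = (0,0) ∧ j = (0,0) then (((1 / 2 : ℝ)) : ℂ)
      else if i = (1,1) ∧ j = (1,1) then (((1 - p) / 2 : ℝ) : ℂ)
      else if i = (1,0) ∧ j = (1,0) then ((p / 2 : ℝ) : ℂ)
      else if i = (0,1) ∧ j = (1,0) then ((Real.sqrt (1 - p) / 2 : ℝ) : ℂ)
      else if i = (1,0) ∧ j = (0,1) then ((Real.sqrt (1 - p) / 2 : ℝ) : ℂ)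
      else 0 := by
    have a1 : (1 - p) / 2 = Real.sqrt (1 - p) * Real.sqrt (1 - p) *
      ((Real.sqrt 2)⁻¹ * (Real.sqrt 2)⁻¹) := by rw [e1, e2]; ring
    have a2 : p / 2 = Real.sqrt p * Real.sqrt p *
      ((Real.sqrt 2)⁻¹ * (Real.sqrt 2)⁻¹) := by rw [e1, e3]; ring
    have a3 : Real.sqrt (1 - p) / 2 = Real.sqrt (1 - p) *
      ((Real.sqrt 2)⁻¹ * (Real.sqrt 2)⁻¹) := by rw [e1]; ring
    rw [a1, a2, a3, ← e1]
    ext ⟨i, j⟩ ⟨k, l⟩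
    fin_cases i <;> fin_cases j <;> fin_cases k <;> fin_cases l <;>
      simp [ptrans, ampDamp, outer, phiPlus, ketChi, M0, M1, Matrix.mul_apply,
        Fintype.sum_prod_type, Fin.sum_univ_two, Matrix.one_apply, kroneckerMap_apply] <;>
      ring
  rw [key]
  simp only [Matrix.trace, Matrix.diag, Matrix.mul_apply, Fintype.sum_prod_type,
    Fin.sum_univ_two, Matrix.of_apply]
  simp [hji, -Complex.ofReal_div, -Complex.ofReal_sub]
  ring

/-- Proposition 1: For `0 < p < 1`, the maximum achievable fidelity under
trace-preserving LOCC of `ρ(Φ⁺, Λ_p)` is strictly smaller than the maximum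
pre-processed fidelity `F_max = 1 − p/2`. -/
theorem FStar_phiPlus_lt_Fmax (p : ℝ) (hp0 : 0 < p) (hp1 : p < 1) :
    FStar (ampDamp p (outer phiPlus)) < 1 - p / 2 := by
  obtain ⟨s, hs⟩ : ∃ s, s = Real.sqrt (1 - p) := ⟨_, rfl⟩
  have s0 : 0 ≤ s := hs ▸ Real.sqrt_nonneg _
  have s2 : s ^ 2 = 1 - p := by rw [hs]; exact Real.sq_sqrt (by linarith)
  have hne : {x : ℝ | ∃ X : Matrix Q2 Q2 ℂ,
    X.IsHermitian ∧ X.PosSemidef ∧ ((1 : Matrix Q2 Q2 ℂ) - X).PosSemidef ∧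
    (ptrans X + (1 / 2 : ℂ) • (1 : Matrix Q2 Q2 ℂ)).PosSemidef ∧
    ((1 / 2 : ℂ) • (1 : Matrix Q2 Q2 ℂ) - ptrans X).PosSemidef ∧
    x = 1 / 2 - ((X * ptrans (ampDamp p (outer phiPlus))).trace).re}.Nonempty := by
    have h0 : ptrans 0 = 0 := by ext; simp [ptrans]
    have h1 : ((1 / 2 : ℂ) • (1 : Matrix Q2 Q2 ℂ)).PosSemidef :=
      Matrix.PosSemidef.one.smul (by rw [Complex.le_def]; norm_num)
    refine ⟨_, 0, Matrix.isHermitian_zero, Matrix.PosSemidef.zero, ?_, ?_, ?_, rfl⟩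
    · simpa using (Matrix.PosSemidef.one : (1 : Matrix Q2 Q2 ℂ).PosSemidef)
    · rw [h0, zero_add]; exact h1
    · rw [h0, sub_zero]; exact h1
  have main : ∀ M : ℝ, (∀ a c d t : ℝ, 0 ≤ a → 0 ≤ d → 2 * t ≤ 1 - a - d →
      (∀ α : ℝ, 0 ≤ α ^ 2 / 2 - 2 * α * t + c) →
      1 / 2 - a / 2 - (1 - p) / 2 * d - p / 2 * c + s * t ≤ M) →
      FStar (ampDamp p (outer phiPlus)) ≤ M := by
    intro M hM
    refine csSup_le hne ?_
    rintro x ⟨X, hX, hP, -, -, hG, rfl⟩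
    rw [trace_formula p hp0 hp1 X hX, ← hs]
    have g1 := psd_two hG (0,0) (1,1) 1 (-1)
    have g2 := psd_two hG (0,1) (0,1) 1 0
    have k1 := psd_two hP (0,0) (0,0) 1 0
    have k2 := psd_two hP (1,1) (1,1) 1 0
    simp [ptrans, Matrix.one_apply] at g1 g2 k1 k2
    have := hM (X (0,0) (0,0)).re (X (1,0) (1,0)).re (X (1,1) (1,1)).re (-(X (0,1) (1,0)).re)
      k1 k2 (by linarith) (fun α => by
        have k3 := psd_two hP (0,1) (1,0) α 1
        nlinarith [mul_nonneg (sq_nonneg α) (sub_nonneg.2 g2)])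
    linarith
  rcases le_or_gt p (1 / 2) with h | h
  · refine (main (1 / 2 + s / 2 - p / 4) ?_).trans_lt ?_
    · intro a c d t ha hd ht hc
      have hsp : p ≤ s := by nlinarith
      have := hc 1
      nlinarith [mul_nonneg (sub_nonneg.2 hsp) (show 0 ≤ 1 - a - d - 2 * t by linarith),
        mul_nonneg (sub_nonneg.2 hsp) ha, mul_nonneg (sub_nonneg.2 hsp) hd,
        mul_nonneg hp0.le this, mul_nonneg (sub_nonneg.2 hp1.le) hd]
    · nlinarith
  · refine (main (1 / 2 + (1 - p) / (4 * p)) ?_).trans_lt ?_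
    · intro a c d t ha hd ht hc
      have h1 := mul_nonneg hp0.le (hc (s / p))
      have e : p * ((s / p) ^ 2 / 2 - 2 * (s / p) * t + c) =
          2 * ((1 - p) / (4 * p)) - 2 * s * t + p * c := by
        rw [← s2]; field_simp; ring
      rw [e] at h1
      nlinarith [mul_nonneg (sub_nonneg.2 hp1.le) hd]
    · have : (1 - p) / (4 * p) < (1 - p) / 2 :=
        div_lt_div_of_pos_left (by linarith) (by norm_num) (by linarith)
      linarith
end

section
/- Let 0 < p < 1 and let α, β be real with α ≥ β > 0, α² + β² = 1, and suppose 1/2 ≤ α² < p²/(1−p+p²). Then the maximum achievable fidelity under trace-preserving LOCC of ρ(χ(α), Λ_p) equals F*(ρ(χ(α), Λ_p)) = (1 + α²(1−p)/p)/2. -/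
open Matrix Complex
open scoped Kronecker ComplexOrder

theorem psd_aux (d v : Q2 → ℝ) (hd : ∀ i, 0 ≤ d i) (M : Matrix Q2 Q2 ℂ)
    (hM : ∀ i j, M i j = (if i = j then (d i : ℂ) else 0) + (1 / 2 : ℂ) * (v i * v j)) :
    M.PosSemidef := by
  have h1 : (Matrix.diagonal (fun i => (d i : ℂ))).PosSemidef := by
    rw [Matrix.posSemidef_diagonal_iff]
    intro i
    exact_mod_cast hd i
  have h2 := (Matrix.posSemidef_vecMulVec_self_star (fun i => (v i : ℂ))).smul
    (show (0 : ℝ) ≤ 1 / 2 by norm_num)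
  have h3 := h1.add h2
  convert h3 using 1
  ext i j
  rw [hM]
  simp [Matrix.diagonal_apply, Matrix.vecMulVec_apply]

theorem trace_aux (p α β : ℝ) (hp0 : 0 < p) (hp1 : p < 1) (X : Matrix Q2 Q2 ℂ) :
    ((X * ptrans (ampDamp p (outer (ketChi α β)))).trace).re =
      α ^ 2 * (X (0,0) (0,0)).re + β ^ 2 * (1 - p) * (X (1,1) (1,1)).re
      + β ^ 2 * p * (X (1,0) (1,0)).re
      + α * β * √(1 - p) * ((X (0,1) (1,0)).re + (X (1,0) (0,1)).re) := by
  have e1 : √(1 - p) * √(1 - p) = 1 - p := Real.mul_self_sqrt (by linarith)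
  have e2 : √p * √p = p := Real.mul_self_sqrt hp0.le
  simp [Matrix.trace, Matrix.mul_apply, ptrans, ampDamp, outer, ketChi, M0, M1,
    Fintype.sum_prod_type, Fin.sum_univ_two, Matrix.one_apply]
  generalize √(1 - p) = r at *
  generalize √p = q at *
  rw [← e1, ← e2]
  ring

theorem lower_aux (X : Matrix Q2 Q2 ℂ) (hX : X.PosSemidef) (t : ℝ) :
    0 ≤ t ^ 2 * (X (0,1) (0,1)).re + (X (1,0) (1,0)).re
      + t * ((X (0,1) (1,0)).re + (X (1,0) (0,1)).re) := by
  have h := hX.dotProduct_mulVec_nonneg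
    (fun i => if i = (0,1) then (t : ℂ) else if i = (1,0) then 1 else 0)
  have hre := (Complex.le_def.1 h).1
  simp [dotProduct, Matrix.mulVec, Fintype.sum_prod_type, Fin.sum_univ_two] at hre
  nlinarith [hre]

/-- The optimal test operator. -/
noncomputable def Xopt (y : ℝ) : Matrix Q2 Q2 ℂ :=
  Matrix.of fun i j => (1 / 2 : ℂ) *
    (((if i = (0,1) then 1 else if i = (1,0) then 2 * y else 0 : ℝ) : ℂ) *
     ((if j = (0,1) then 1 else if j = (1,0) then 2 * y else 0 : ℝ) : ℂ))

/-- For `0 < p < 1`, `α ≥ β > 0`, `α² + β² = 1` and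
`1/2 ≤ α² < p²/(1−p+p²)`, the maximum achievable fidelity under trace-preserving LOCC
of `ρ(χ(α), Λ_p)` equals `(1 + α²(1−p)/p)/2`. -/
theorem FStar_regime_two (p α β : ℝ) (hp0 : 0 < p) (hp1 : p < 1)
    (hba : β ≤ α) (hb : 0 < β) (hnorm : α ^ 2 + β ^ 2 = 1)
    (hlow : 1 / 2 ≤ α ^ 2) (hhigh : α ^ 2 < p ^ 2 / (1 - p + p ^ 2)) :
    FStar (ampDamp p (outer (ketChi α β))) =
      (1 + α ^ 2 * (1 - p) / p) / 2 := by
  have hr2 : √(1 - p) ^ 2 = 1 - p := Real.sq_sqrt (by linarith)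
  have hden : 0 < 1 - p + p ^ 2 := by nlinarith
  rw [lt_div_iff₀ hden] at hhigh
  have tr := fun X => trace_aux p α β hp0 hp1 X
  have hr : 0 ≤ √(1 - p) := Real.sqrt_nonneg _
  generalize √(1 - p) = r at *
  have hbp : 0 < β * p := mul_pos hb hp0
  obtain ⟨t, ht⟩ : ∃ t, t = α * r / (β * p) := ⟨_, rfl⟩
  have htb : t * (β * p) = α * r := by rw [ht]; field_simp
  have ht1 : t ^ 2 ≤ 1 := by
    have h1 : t ^ 2 * (β * p) ^ 2 ≤ 1 * (β * p) ^ 2 := by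
      have : t ^ 2 * (β * p) ^ 2 = α ^ 2 * (1 - p) := by
        rw [← mul_pow, htb, mul_pow, hr2]
      rw [this]
      nlinarith
    exact le_of_mul_le_mul_right h1 (by positivity)
  have hval : β ^ 2 * p * t ^ 2 = α ^ 2 * (1 - p) / p := by
    rw [eq_div_iff hp0.ne']
    have : β ^ 2 * p * t ^ 2 * p = (t * (β * p)) ^ 2 := by ring
    rw [this, htb, mul_pow, hr2]
  have hc : α * β * r = β ^ 2 * p * t := by
    have : β ^ 2 * p * t = β * (t * (β * p)) := by ring
    rw [this, htb]; ring
  have hB : 0 < β ^ 2 * p := by positivity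
  unfold FStar
  apply IsGreatest.csSup_eq
  constructor
  · have hX : (Xopt (-t / 2)).PosSemidef := by
      apply psd_aux (fun _ => 0)
        (fun i => if i = (0,1) then 1 else if i = (1,0) then 2 * (-t / 2) else 0)
      · intro i; exact le_rfl
      · intro i j; simp [Xopt]
    refine ⟨Xopt (-t / 2), hX.1, hX, ?_, ?_, ?_, ?_⟩
    · apply psd_aux
        (fun i => if i = (0,1) then 0 else if i = (1,0) then 1 - t ^ 2 else 1)
        (fun i => if i = (0,1) then 1 else if i = (1,0) then t else 0)
      · rintro ⟨i, j⟩; fin_cases i <;> fin_cases j <;> simp [-sq_le_one_iff_abs_le_one] <;> nlinarith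
      · rintro ⟨i, j⟩ ⟨k, l⟩
        fin_cases i <;> fin_cases j <;> fin_cases k <;> fin_cases l <;>
          simp [Xopt, Matrix.one_apply] <;> ring
    · apply psd_aux
        (fun i => if i = (0,0) then 0 else if i = (0,1) then 1 else
          if i = (1,0) then 1 / 2 + t ^ 2 / 2 else 1 / 2 - t ^ 2 / 2)
        (fun i => if i = (0,0) then 1 else if i = (1,1) then -t else 0)
      · rintro ⟨i, j⟩; fin_cases i <;> fin_cases j <;> simp <;> nlinarith
      · rintro ⟨i, j⟩ ⟨k, l⟩
        fin_cases i <;> fin_cases j <;> fin_cases k <;> fin_cases l <;>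
          simp [Xopt, ptrans, Matrix.one_apply] <;> ring
    · apply psd_aux
        (fun i => if i = (0,0) then 0 else if i = (0,1) then 0 else
          1 / 2 - t ^ 2 / 2)
        (fun i => if i = (0,0) then 1 else if i = (1,1) then t else 0)
      · rintro ⟨i, j⟩; fin_cases i <;> fin_cases j <;> simp <;> nlinarith
      · rintro ⟨i, j⟩ ⟨k, l⟩
        fin_cases i <;> fin_cases j <;> fin_cases k <;> fin_cases l <;>
          simp [Xopt, ptrans, Matrix.one_apply] <;> ring
    · rw [tr, hc, ← hval]
      simp [Xopt]
      ring
  · rintro x ⟨X, -, hX, -, -, hu, rfl⟩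
    rw [tr, hc, ← hval]
    have d0 := (Complex.le_def.1 (hX.diag_nonneg (i := (0,0)))).1
    have d3 := (Complex.le_def.1 (hX.diag_nonneg (i := (1,1)))).1
    have d1 := (Complex.le_def.1 (hu.diag_nonneg (i := (0,1)))).1
    simp [ptrans] at d0 d1 d3
    have hl := mul_nonneg hB.le (lower_aux X hX t)
    have k0 := mul_nonneg (sq_nonneg α) d0
    have k3 := mul_nonneg (mul_nonneg (sq_nonneg β) (sub_nonneg.2 hp1.le)) d3
    have k1 := mul_nonneg (mul_nonneg hB.le (sq_nonneg t)) (sub_nonneg.2 d1)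
    nlinarith
end

section
/- (Proposition 2) Let 0 < p < 1 and let α, β be real with α ≥ β > 0 and α² + β² = 1. Then F*(ρ(χ(α), Λ_p)) > F(ρ(χ(α), Λ_p)) — i.e., trace-preserving local operations can strictly enhance the fidelity of ρ(χ(α), Λ_p) — if and only if p > (√5 − 1)/2 and α² < p²/(1−p+p²). Equivalently, enhancement is possible exactly when p > (√5 − 1)/2 and the concurrence 2αβ of |χ(α)⟩ exceeds the concurrence of |χ(√(g(p)))⟩ where g(p) = p²/(1−p+p²). -/
open Matrix Complex
open scoped Kronecker ComplexOrder

/-- Explicit form of the damped state. -/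
noncomputable def rhoE (a c d e : ℝ) : Matrix Q2 Q2 ℂ :=
  Matrix.of fun i j =>
    if i = (0, 0) then (if j = (0, 0) then (a : ℂ) else if j = (1, 1) then (c : ℂ) else 0)
    else if i = (1, 0) then (if j = (1, 0) then (d : ℂ) else 0)
    else if i = (1, 1) then (if j = (0, 0) then (c : ℂ) else if j = (1, 1) then (e : ℂ) else 0)
    else 0

lemma sqrt_mul_selfC {x : ℝ} (hx : 0 ≤ x) : (Real.sqrt x : ℂ) * (Real.sqrt x : ℂ) = (x : ℂ) := by
  rw [← Complex.ofReal_mul, Real.mul_self_sqrt hx]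

lemma ampDamp_eq (p α β : ℝ) (hp0 : 0 < p) (hp1 : p < 1) :
    ampDamp p (outer (ketChi α β)) =
      rhoE (α ^ 2) (α * β * Real.sqrt (1 - p)) (β ^ 2 * p) (β ^ 2 * (1 - p)) := by
  have h1 := sqrt_mul_selfC hp0.le
  have h2 := sqrt_mul_selfC (sub_nonneg.2 hp1.le)
  push_cast at h2
  ext ⟨i, j⟩ ⟨k, l⟩
  fin_cases i <;> fin_cases j <;> fin_cases k <;> fin_cases l <;>
    simp [ampDamp, outer, ketChi, rhoE, M0, M1, Matrix.mul_apply, Fintype.sum_prod_type,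
      Fin.sum_univ_two, Matrix.kroneckerMap_apply, Matrix.conjTranspose_apply, Matrix.one_apply]
  all_goals first
    | ring1
    | linear_combination (β : ℂ) ^ 2 * h1
    | linear_combination (β : ℂ) ^ 2 * h2

lemma expectation_rhoE (ψ : Q2 → ℂ) (a c d e : ℝ) :
    expectation ψ (rhoE a c d e) = a * normSq (ψ (0, 0)) + d * normSq (ψ (1, 0)) +
      e * normSq (ψ (1, 1)) + 2 * c * ((ψ (0, 0)).re * (ψ (1, 1)).re +
        (ψ (0, 0)).im * (ψ (1, 1)).im) := by
  simp [expectation, rhoE, Fintype.sum_prod_type, Fin.sum_univ_two, normSq_apply]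
  ring

lemma maxEnt_facts {ψ : Q2 → ℂ} (h : MaxEnt ψ) :
    normSq (ψ (0, 0)) + normSq (ψ (1, 0)) = 1 / 2 ∧ normSq (ψ (1, 1)) = normSq (ψ (0, 0)) := by
  obtain ⟨-, h2, h3⟩ := h
  have e1 := congrArg Complex.re (congrFun (congrFun h2 1) 1)
  have e2 := congrArg Complex.re (congrFun (congrFun h3 0) 0)
  simp [trSecond, trFirst, outer, Fin.sum_univ_two] at e1 e2
  simp only [normSq_apply]
  constructor <;> linarith

lemma fid_le {ψ : Q2 → ℂ} (h : MaxEnt ψ) {a c d e : ℝ} (hc : 0 ≤ c) (he : 0 ≤ e) (hd : d ≤ a) :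
    expectation ψ (rhoE a c d e) ≤ (a + e) / 2 + c := by
  obtain ⟨h1, h2⟩ := maxEnt_facts h
  rw [expectation_rhoE, h2]
  have h3 : 2 * ((ψ (0, 0)).re * (ψ (1, 1)).re + (ψ (0, 0)).im * (ψ (1, 1)).im) ≤
      2 * normSq (ψ (0, 0)) := by
    have : normSq (ψ (0, 0)) + normSq (ψ (1, 1)) = 2 * normSq (ψ (0, 0)) := by rw [h2]; ring
    rw [← this]
    simp only [normSq_apply]
    nlinarith [sq_nonneg ((ψ (0, 0)).re - (ψ (1, 1)).re), sq_nonneg ((ψ (0, 0)).im - (ψ (1, 1)).im)]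
  have h4 := normSq_nonneg (ψ (0, 0))
  have h5 := normSq_nonneg (ψ (1, 0))
  have h6 : normSq (ψ (0, 0)) = 1 / 2 - normSq (ψ (1, 0)) := by linarith
  rw [h6] at h3 ⊢
  have := mul_le_mul_of_nonneg_left h3 hc
  nlinarith [mul_nonneg hc h5, mul_nonneg he h5, mul_nonneg (sub_nonneg.2 hd) h5]

lemma fid_eq_s10 {a c d e : ℝ} (hc : 0 ≤ c) (he : 0 ≤ e) (hd : d ≤ a) :
    Fid (rhoE a c d e) = (a + e) / 2 + c := by
  apply IsGreatest.csSup_eq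
  constructor
  · refine ⟨phiPlus, maxEnt_phiPlus, ?_⟩
    have h : (Real.sqrt 2)⁻¹ * (Real.sqrt 2)⁻¹ = (1 / 2 : ℝ) := by
      rw [← mul_inv, Real.mul_self_sqrt (by norm_num)]; norm_num
    have e1 : phiPlus (0, 0) = (((Real.sqrt 2)⁻¹ : ℝ) : ℂ) := by simp [phiPlus, ketChi]
    have e2 : phiPlus (1, 1) = (((Real.sqrt 2)⁻¹ : ℝ) : ℂ) := by simp [phiPlus, ketChi]
    have e3 : phiPlus (1, 0) = 0 := by simp [phiPlus, ketChi]
    rw [expectation_rhoE, e1, e2, e3]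
    simp only [normSq_ofReal, ofReal_re, ofReal_im, h, map_zero]
    ring
  · rintro x ⟨ψ, hψ, rfl⟩
    exact fid_le hψ hc he hd

lemma trace_rhoE (X : Matrix Q2 Q2 ℂ) (hX : X.IsHermitian) (a c d e : ℝ) :
    ((X * ptrans (rhoE a c d e)).trace).re = a * (X (0, 0) (0, 0)).re +
      d * (X (1, 0) (1, 0)).re + e * (X (1, 1) (1, 1)).re + 2 * c * (X (0, 1) (1, 0)).re := by
  have h : (X (1, 0) (0, 1)).re = (X (0, 1) (1, 0)).re := by
    have := congrArg Complex.re (hX.apply (0, 1) (1, 0))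
    simpa using this
  simp [Matrix.trace, Matrix.mul_apply, ptrans, rhoE, Fintype.sum_prod_type, Fin.sum_univ_two, h]
  ring

/-- Consequences of feasibility. -/
lemma feas_facts {X : Matrix Q2 Q2 ℂ} (hX : X.PosSemidef)
    (hG : ((1 / 2 : ℂ) • (1 : Matrix Q2 Q2 ℂ) - ptrans X).PosSemidef) :
    0 ≤ (X (0, 0) (0, 0)).re ∧ 0 ≤ (X (1, 1) (1, 1)).re ∧ 0 ≤ (X (1, 0) (1, 0)).re ∧
      (X (1, 0) (1, 0)).re ≤ 1 / 2 ∧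
      2 * (X (0, 1) (1, 0)).re ^ 2 ≤ (X (1, 0) (1, 0)).re := by
  have hd : ∀ i, 0 ≤ (X i i).re ∧ (X i i).im = 0 := by
    intro i
    have := hX.diag_nonneg (i := i)
    rw [Complex.le_def] at this
    exact ⟨this.1, this.2.symm⟩
  have hg : ∀ i j, (X (i, j) (i, j)).re ≤ 1 / 2 := by
    intro i j
    have := hG.diag_nonneg (i := (i, j))
    rw [Complex.le_def] at this
    have := this.1
    simp [ptrans] at this
    linarith
  have hdet := (hX.submatrix ![((0 : Fin 2), (1 : Fin 2)), (1, 0)]).det_nonneg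
  rw [Matrix.det_fin_two, Complex.le_def] at hdet
  have h := hdet.1
  have hh := hX.isHermitian.apply (0, 1) (1, 0)
  simp [← hX.isHermitian.apply (1, 0) (0, 1), (hd (0, 1)).2, (hd (1, 0)).2] at h
  refine ⟨(hd _).1, (hd _).1, (hd _).1, hg 1 0, ?_⟩
  nlinarith [(hd (0, 1)).1, (hd (1, 0)).1, hg 0 1, sq_nonneg (X (0, 1) (1, 0)).im]

lemma fstar_bdd {a c d e : ℝ} (hc : 0 ≤ c) (ha : 0 ≤ a) (hd : 0 ≤ d) (he : 0 ≤ e) :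
    BddAbove {x : ℝ | ∃ X : Matrix Q2 Q2 ℂ,
    X.IsHermitian ∧ X.PosSemidef ∧ ((1 : Matrix Q2 Q2 ℂ) - X).PosSemidef ∧
    (ptrans X + (1 / 2 : ℂ) • (1 : Matrix Q2 Q2 ℂ)).PosSemidef ∧
    ((1 / 2 : ℂ) • (1 : Matrix Q2 Q2 ℂ) - ptrans X).PosSemidef ∧
    x = 1 / 2 - ((X * ptrans (rhoE a c d e)).trace).re} := by
  refine ⟨1 / 2 + c, ?_⟩
  rintro x ⟨X, hH, hX, -, -, hG, rfl⟩
  rw [trace_rhoE X hH]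
  obtain ⟨h1, h2, h3, h4, h5⟩ := feas_facts hX hG
  have hr : -(1 / 2) ≤ (X (0, 1) (1, 0)).re := by nlinarith
  nlinarith [mul_nonneg ha h1, mul_nonneg he h2, mul_nonneg hd h3, mul_le_mul_of_nonneg_left hr hc]

lemma fstar_le {a c d e : ℝ} (hc : 0 ≤ c) (ha : 0 ≤ a) (hd : 0 ≤ d) (he : 0 ≤ e) (hdc : d ≤ c)
    (hd1 : d ≤ 1) :
    FStar (rhoE a c d e) ≤ 1 / 2 - d / 2 + c := by
  apply Real.sSup_le
  · rintro x ⟨X, hH, hX, -, -, hG, rfl⟩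
    rw [trace_rhoE X hH]
    obtain ⟨h1, h2, h3, h4, h5⟩ := feas_facts hX hG
    set r := (X (0, 1) (1, 0)).re
    have hr : -(1 / 2) ≤ r := by nlinarith
    have hr2 : r ≤ 1 / 2 := by nlinarith
    have key : d / 2 - c ≤ 2 * d * r ^ 2 + 2 * c * r := by
      nlinarith [mul_nonneg (sub_nonneg.2 hdc) (by linarith : 0 ≤ 1 / 2 + r),
        mul_nonneg hd (sq_nonneg (1 / 2 + r))]
    nlinarith [mul_nonneg ha h1, mul_nonneg he h2, mul_le_mul_of_nonneg_left h5 hd]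
  · linarith

lemma psd_of {M : Matrix Q2 Q2 ℂ} (s : ℝ) (u d : Q2 → ℝ) (hs : 0 ≤ s) (hd : ∀ i, 0 ≤ d i)
    (h : M = (s : ℂ) • Matrix.vecMulVec (fun i => (u i : ℂ)) (star fun i => (u i : ℂ)) +
      Matrix.diagonal (fun i => (d i : ℂ))) : M.PosSemidef := by
  rw [h]
  apply Matrix.PosSemidef.add
  · exact (Matrix.posSemidef_vecMulVec_self_star _).smul (by exact_mod_cast hs)
  · exact Matrix.PosSemidef.diagonal (fun i => Complex.zero_le_real.2 (hd i))

/-- The filtering witness. -/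
noncomputable def wit (w : ℝ) : Matrix Q2 Q2 ℂ :=
  Matrix.of fun i j =>
    if i = (0, 1) then (if j = (0, 1) then (1 / 2 : ℂ) else if j = (1, 0) then -(w : ℂ) else 0)
    else if i = (1, 0) then
      (if j = (0, 1) then -(w : ℂ) else if j = (1, 0) then 2 * (w : ℂ) ^ 2 else 0)
    else 0

lemma fstar_ge {a c d e : ℝ} (hc : 0 ≤ c) (ha : 0 ≤ a) (hd : 0 ≤ d) (he : 0 ≤ e)
    (w : ℝ) (hw0 : 0 ≤ w) (hw : w ≤ 1 / 2) :
    1 / 2 - 2 * d * w ^ 2 + 2 * c * w ≤ FStar (rhoE a c d e) := by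
  have hw2 : 4 * w ^ 2 ≤ 1 := by nlinarith
  have hX : (wit w).PosSemidef := by
    refine psd_of (1 / 2) (fun i => if i = (0, 1) then 1 else if i = (1, 0) then -2 * w else 0)
      (fun _ => 0) (by norm_num) (fun _ => le_rfl) ?_
    ext ⟨i, j⟩ ⟨k, l⟩
    fin_cases i <;> fin_cases j <;> fin_cases k <;> fin_cases l <;>
      simp [wit, Matrix.vecMulVec_apply]
    all_goals ring
  apply le_csSup (fstar_bdd hc ha hd he)
  refine ⟨wit w, hX.isHermitian, hX, ?_, ?_, ?_, ?_⟩
  · refine psd_of (1 / 2) (fun i => if i = (0, 1) then 1 else if i = (1, 0) then 2 * w else 0)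
      (fun i => if i = (0, 1) then 0 else if i = (1, 0) then 1 - 4 * w ^ 2 else 1)
      (by norm_num) (fun i => by split_ifs <;> linarith) ?_
    ext ⟨i, j⟩ ⟨k, l⟩
    fin_cases i <;> fin_cases j <;> fin_cases k <;> fin_cases l <;>
      simp [wit, Matrix.vecMulVec_apply, Matrix.one_apply, Matrix.diagonal_apply]
    all_goals ring
  · refine psd_of w (fun i => if i = (0, 0) then 1 else if i = (1, 1) then -1 else 0)
      (fun i => if i = (0, 1) then 1 else if i = (1, 0) then 1 / 2 + 2 * w ^ 2 else 1 / 2 - w)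
      hw0 (fun i => by split_ifs <;> nlinarith) ?_
    ext ⟨i, j⟩ ⟨k, l⟩
    fin_cases i <;> fin_cases j <;> fin_cases k <;> fin_cases l <;>
      simp [wit, ptrans, Matrix.vecMulVec_apply, Matrix.one_apply, Matrix.diagonal_apply]
    all_goals ring
  · refine psd_of w (fun i => if i = (0, 0) then 1 else if i = (1, 1) then 1 else 0)
      (fun i => if i = (0, 1) then 0 else if i = (1, 0) then 1 / 2 - 2 * w ^ 2 else 1 / 2 - w)
      hw0 (fun i => by split_ifs <;> nlinarith) ?_
    ext ⟨i, j⟩ ⟨k, l⟩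
    fin_cases i <;> fin_cases j <;> fin_cases k <;> fin_cases l <;>
      simp [wit, ptrans, Matrix.vecMulVec_apply, Matrix.one_apply, Matrix.diagonal_apply]
    all_goals ring
  · rw [trace_rhoE _ hX.isHermitian]
    have : ((w : ℂ) ^ 2).re = w ^ 2 := by rw [← ofReal_pow, ofReal_re]
    simp [wit, this]
    ring

lemma enh_iff (p α β : ℝ) (hp0 : 0 < p) (hp1 : p < 1)
    (hba : β ≤ α) (hb : 0 < β) (hnorm : α ^ 2 + β ^ 2 = 1) :
    Fid (ampDamp p (outer (ketChi α β))) < FStar (ampDamp p (outer (ketChi α β))) ↔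
      α ^ 2 < p ^ 2 / (1 - p + p ^ 2) := by
  rw [ampDamp_eq p α β hp0 hp1]
  have hα : 0 < α := lt_of_lt_of_le hb hba
  have hq : 0 < 1 - p := by linarith
  have hs := Real.sqrt_pos.2 hq
  have hss := Real.sq_sqrt hq.le
  set s := Real.sqrt (1 - p)
  have hc : 0 < α * β * s := by positivity
  have hd : 0 < β ^ 2 * p := by positivity
  have he : 0 ≤ β ^ 2 * (1 - p) := by positivity
  have hda : β ^ 2 * p ≤ α ^ 2 := by nlinarith
  have hF : (α ^ 2 + β ^ 2 * (1 - p)) / 2 = 1 / 2 - β ^ 2 * p / 2 := by linarith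
  have hden : 0 < 1 - p + p ^ 2 := by positivity
  have hcond : α ^ 2 < p ^ 2 / (1 - p + p ^ 2) ↔ α * β * s < β ^ 2 * p := by
    have e1 : α * β * s < β ^ 2 * p ↔ α * s < β * p := by
      rw [show α * β * s = β * (α * s) by ring, show β ^ 2 * p = β * (β * p) by ring]
      exact mul_lt_mul_iff_right₀ hb
    have e2 : (α * s) ^ 2 < (β * p) ^ 2 ↔ α * s < β * p :=
      pow_lt_pow_iff_left₀ (by positivity) (by positivity) (by norm_num)
    rw [e1, ← e2, lt_div_iff₀ hden, mul_pow, mul_pow, hss,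
      show β ^ 2 = 1 - α ^ 2 by linarith]
    constructor <;> intro h <;> nlinarith
  rw [fid_eq_s10 hc.le he hda, hF, hcond]
  constructor
  · intro h
    by_contra! hn
    exact absurd (fstar_le hc.le (sq_nonneg α) hd.le he hn (by nlinarith)) (not_le.2 h)
  · intro h
    set c := α * β * s
    set d := β ^ 2 * p
    have hw : c / (2 * d) ≤ 1 / 2 := by
      rw [div_le_div_iff₀ (by positivity) (by norm_num)]; linarith
    refine lt_of_lt_of_le ?_ (fstar_ge hc.le (sq_nonneg α) hd.le he _ (by positivity) hw)
    have e : -(2 * d * (c / (2 * d)) ^ 2) + 2 * c * (c / (2 * d)) - (c - d / 2) =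
        (d - c) ^ 2 / (2 * d) := by
      field_simp
      ring
    have : 0 < (d - c) ^ 2 / (2 * d) := by
      have : 0 < d - c := by linarith
      positivity
    linarith

/-- Proposition 2: For `0 < p < 1`, `α ≥ β > 0`, `α² + β² = 1`,
trace-preserving local operations strictly enhance the fidelity of `ρ(χ(α), Λ_p)`
if and only if `p > (√5 − 1)/2` and `α² < p²/(1−p+p²) = g(p)`; equivalently, iff
`p > (√5 − 1)/2` and the concurrence `2αβ` of `|χ(α)⟩` exceeds the concurrence of
`|χ(√(g(p)))⟩`. -/
theorem enhancement_iff (p α β : ℝ) (hp0 : 0 < p) (hp1 : p < 1)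
    (hba : β ≤ α) (hb : 0 < β) (hnorm : α ^ 2 + β ^ 2 = 1) :
    (Fid (ampDamp p (outer (ketChi α β))) < FStar (ampDamp p (outer (ketChi α β))) ↔
      ((Real.sqrt 5 - 1) / 2 < p ∧ α ^ 2 < p ^ 2 / (1 - p + p ^ 2))) ∧
    (Fid (ampDamp p (outer (ketChi α β))) < FStar (ampDamp p (outer (ketChi α β))) ↔
      ((Real.sqrt 5 - 1) / 2 < p ∧
        2 * Real.sqrt (p ^ 2 / (1 - p + p ^ 2)) *
          Real.sqrt (1 - p ^ 2 / (1 - p + p ^ 2)) < 2 * α * β)) := by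
  have hE := enh_iff p α β hp0 hp1 hba hb hnorm
  have hα : 0 < α := lt_of_lt_of_le hb hba
  have ha : 1 / 2 ≤ α ^ 2 := by nlinarith
  have hq : 0 < 1 - p := by linarith
  have hden : 0 < 1 - p + p ^ 2 := by positivity
  have h5 : Real.sqrt 5 ^ 2 = 5 := Real.sq_sqrt (by norm_num)
  have h50 := Real.sqrt_nonneg 5
  rw [hE]
  have hgold : 1 / 2 < p ^ 2 / (1 - p + p ^ 2) ↔ (Real.sqrt 5 - 1) / 2 < p := by
    rw [lt_div_iff₀ hden]
    constructor
    · intro h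
      by_contra! hn
      nlinarith
    · intro h
      nlinarith
  have hg1 : p ^ 2 / (1 - p + p ^ 2) < 1 := by
    rw [div_lt_one hden]; linarith
  have hg0 : 0 < p ^ 2 / (1 - p + p ^ 2) := by positivity
  rw [← hgold]
  set g := p ^ 2 / (1 - p + p ^ 2)
  refine ⟨⟨fun h => ⟨lt_of_le_of_lt ha h, h⟩, fun h => h.2⟩, ?_⟩
  have hconc : 2 * Real.sqrt g * Real.sqrt (1 - g) < 2 * α * β ↔ g * (1 - g) < α ^ 2 * β ^ 2 := by
    rw [mul_assoc, mul_assoc, mul_lt_mul_iff_right₀ (by norm_num : (0 : ℝ) < 2),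
      ← Real.sqrt_mul hg0.le, Real.sqrt_lt' (by positivity), mul_pow]
  rw [hconc, show β ^ 2 = 1 - α ^ 2 by linarith]
  constructor
  · intro h
    exact ⟨lt_of_le_of_lt ha h, by nlinarith⟩
  · rintro ⟨h1, h2⟩
    by_contra! hn
    nlinarith [mul_nonneg (sub_nonneg.2 hn) (by linarith : 0 ≤ α ^ 2 + g - 1)]
end

section
/- (Ordering reversal under a trace-preserving completely positive map) Let 0 < p < 1, let |Φ⁺⟩ = (|00⟩ + |11⟩)/√2 and |χ₀⟩ = (1/√(2−p))|00⟩ + √((1−p)/(2−p))|11⟩. Then F*(|Φ⁺⟩⟨Φ⁺|) ≥ F*(|χ₀⟩⟨χ₀|), yet after both states undergo the same local interaction I⊗Λ_p, the ordering is reversed: F*(ρ(χ₀, Λ_p)) > F*(ρ(Φ⁺, Λ_p)). -/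
open Matrix Complex
open scoped Kronecker ComplexOrder

lemma psd_quad {M : Matrix Q2 Q2 ℂ} (h : M.PosSemidef) (v : Q2 → ℝ) :
    0 ≤ ∑ i : Q2, ∑ j : Q2, v i * v j * (M i j).re := by
  have h1 := h.dotProduct_mulVec_nonneg (fun i => (v i : ℂ))
  have h2 := (Complex.le_def.1 h1).1
  have e : (star (fun i => (v i : ℂ)) ⬝ᵥ M *ᵥ (fun i => (v i : ℂ))).re
      = ∑ i : Q2, ∑ j : Q2, v i * v j * (M i j).re := by
    simp only [dotProduct, mulVec, Complex.re_sum, Finset.mul_sum]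
    refine Finset.sum_congr rfl fun i _ => Finset.sum_congr rfl fun j _ => ?_
    simp [Complex.mul_re, Complex.mul_im]
    ring
  rw [e] at h2
  simpa using h2

/-- The matrix of the singlet projector. -/
noncomputable def Xs : Matrix Q2 Q2 ℂ := Matrix.of fun i j =>
  if i = (0, 1) ∧ j = (0, 1) then 1 / 2 else if i = (1, 0) ∧ j = (1, 0) then 1 / 2
  else if i = (0, 1) ∧ j = (1, 0) then -1 / 2 else if i = (1, 0) ∧ j = (0, 1) then -1 / 2 else 0

lemma psd_of_proj {P : Matrix Q2 Q2 ℂ} (h : Pᴴ * P = P) : P.PosSemidef := by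
  rw [← h]; exact Matrix.posSemidef_conjTranspose_mul_self P

def Feas (X : Matrix Q2 Q2 ℂ) : Prop :=
    X.IsHermitian ∧ X.PosSemidef ∧ ((1 : Matrix Q2 Q2 ℂ) - X).PosSemidef ∧
    (ptrans X + (1 / 2 : ℂ) • (1 : Matrix Q2 Q2 ℂ)).PosSemidef ∧
    ((1 / 2 : ℂ) • (1 : Matrix Q2 Q2 ℂ) - ptrans X).PosSemidef

lemma FStar_le {ρ : Matrix Q2 Q2 ℂ} {B : ℝ}
    (h : ∀ X, Feas X → 1 / 2 - ((X * ptrans ρ).trace).re ≤ B) (hX : Feas Xs) : FStar ρ ≤ B := by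
  apply csSup_le
  · obtain ⟨a, b, c, d, e⟩ := hX
    exact ⟨_, Xs, a, b, c, d, e, rfl⟩
  · rintro x ⟨X, a, b, c, d, e, rfl⟩
    exact h X ⟨a, b, c, d, e⟩

lemma le_FStar {ρ : Matrix Q2 Q2 ℂ} {B : ℝ}
    (h : ∀ X, Feas X → 1 / 2 - ((X * ptrans ρ).trace).re ≤ B) (hX : Feas Xs) :
    1 / 2 - ((Xs * ptrans ρ).trace).re ≤ FStar ρ := by
  apply le_csSup
  · refine ⟨B, ?_⟩
    rintro x ⟨X, a, b, c, d, e, rfl⟩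
    exact h X ⟨a, b, c, d, e⟩
  · obtain ⟨a, b, c, d, e⟩ := hX
    exact ⟨Xs, a, b, c, d, e, rfl⟩

lemma feas_Xs : Feas Xs := by
  have c2 : (starRingEnd ℂ) 2 = 2 := Complex.conj_ofNat 2
  refine ⟨?_, ?_, ?_, ?_, ?_⟩
  · ext ⟨i, j⟩ ⟨k, l⟩
    fin_cases i <;> fin_cases j <;> fin_cases k <;> fin_cases l <;> simp [Xs]
  all_goals
    apply psd_of_proj
    ext ⟨i, j⟩ ⟨k, l⟩
    rw [Matrix.mul_apply, Fintype.sum_prod_type]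
    fin_cases i <;> fin_cases j <;> fin_cases k <;> fin_cases l <;>
      simp [Xs, ptrans, Matrix.one_apply, c2] <;> norm_num [c2]

/-- Scalar consequences of feasibility. -/
lemma feas_bounds {X : Matrix Q2 Q2 ℂ} (h : Feas X) :
    0 ≤ (X (0,0) (0,0)).re ∧ 0 ≤ (X (1,1) (1,1)).re ∧
    2 * (X (0,1) (1,0)).re ^ 2 ≤ (X (1,0) (1,0)).re ∧
    -(1 / 2) ≤ (X (0,1) (1,0)).re ∧ (X (0,1) (1,0)).re ≤ 1 / 2 ∧
    (X (1,0) (0,1)).re = (X (0,1) (1,0)).re := by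
  obtain ⟨hH, h1, -, -, h4⟩ := h
  have hs : (X (1,0) (0,1)).re = (X (0,1) (1,0)).re := by
    have := hH.apply (1,0) (0,1)
    rw [← this]; simp
  have a1 := psd_quad h1 (fun i => if i = (0,0) then 1 else 0)
  have a2 := psd_quad h1 (fun i => if i = (1,1) then 1 else 0)
  have a3 := psd_quad h1 (fun i => if i = (0,1) then -2 * (X (0,1) (1,0)).re
    else if i = (1,0) then 1 else 0)
  have a4 := psd_quad h4 (fun i => if i = (0,1) then 1 else 0)
  have a5 := psd_quad h4 (fun i => if i = (0,0) then 1 else if i = (1,1) then -1 else 0)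
  have a6 := psd_quad h4 (fun i => if i = (0,0) then 1 else if i = (1,1) then 1 else 0)
  simp [Fintype.sum_prod_type, ptrans, Matrix.one_apply, hs] at a1 a2 a3 a4 a5 a6
  have := mul_nonneg (sq_nonneg (X (0,1) (1,0)).re) (sub_nonneg.2 a4)
  refine ⟨a1, a2, ?_, ?_, ?_, hs⟩ <;> nlinarith

lemma tr_pure (X : Matrix Q2 Q2 ℂ) (a b : ℝ) :
    ((X * ptrans (outer (ketChi a b))).trace).re =
      a ^ 2 * (X (0,0) (0,0)).re + b ^ 2 * (X (1,1) (1,1)).re +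
      a * b * ((X (0,1) (1,0)).re + (X (1,0) (0,1)).re) := by
  simp [Matrix.trace, Matrix.mul_apply, Fintype.sum_prod_type, ptrans, outer, ketChi]
  ring

lemma tr_damp (X : Matrix Q2 Q2 ℂ) (a b p : ℝ) (hp0 : 0 < p) (hp1 : p < 1) :
    ((X * ptrans (ampDamp p (outer (ketChi a b)))).trace).re =
      a ^ 2 * (X (0,0) (0,0)).re + b ^ 2 * p * (X (1,0) (1,0)).re +
      b ^ 2 * (1 - p) * (X (1,1) (1,1)).re +
      a * b * √(1 - p) * ((X (0,1) (1,0)).re + (X (1,0) (0,1)).re) := by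
  have e1 : √p ^ 2 = p := Real.sq_sqrt hp0.le
  have e2 : √(1 - p) ^ 2 = 1 - p := Real.sq_sqrt (by linarith)
  simp [Matrix.trace, Matrix.mul_apply, Fintype.sum_prod_type, ptrans, outer, ketChi, ampDamp,
    M0, M1, Matrix.one_apply]
  generalize √p = u at *
  generalize √(1 - p) = w at *
  rw [← e2, ← e1]
  ring

lemma bd_pure (X : Matrix Q2 Q2 ℂ) (hX : Feas X) (a b : ℝ) (h : a ^ 2 + b ^ 2 = 1) :
    1 / 2 - ((X * ptrans (outer (ketChi a b))).trace).re ≤ 1 := by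
  obtain ⟨h1, h2, -, h4, h5, h6⟩ := feas_bounds hX
  rw [tr_pure, h6]
  have := mul_nonneg (sq_nonneg a) h1
  have := mul_nonneg (sq_nonneg b) h2
  nlinarith [mul_nonneg (sq_nonneg (a + b)) (sub_nonneg.2 h4),
    mul_nonneg (sq_nonneg (a - b)) (sub_nonneg.2 h5)]

lemma bd_damp (X : Matrix Q2 Q2 ℂ) (hX : Feas X) (a b p : ℝ) (hp0 : 0 < p) (hp1 : p < 1) :
    1 / 2 - ((X * ptrans (ampDamp p (outer (ketChi a b)))).trace).re ≤
      1 / 2 - b ^ 2 * p * (2 * (X (0,1) (1,0)).re ^ 2)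
       - 2 * (a * b * √(1 - p)) * (X (0,1) (1,0)).re := by
  obtain ⟨h1, h2, h3, h4, h5, h6⟩ := feas_bounds hX
  rw [tr_damp _ _ _ _ hp0 hp1, h6]
  have := mul_nonneg (sq_nonneg a) h1
  have := mul_nonneg (mul_nonneg (sq_nonneg b) (sub_nonneg.2 hp1.le)) h2
  have := mul_nonneg (mul_nonneg (sq_nonneg b) hp0.le) (sub_nonneg.2 h3)
  nlinarith

/-- Ordering reversal: For `0 < p < 1`, before the interaction
`F*(|Φ⁺⟩⟨Φ⁺|) ≥ F*(|χ₀⟩⟨χ₀|)`, yet after both states undergo the same local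
interaction `I ⊗ Λ_p` the ordering of the entanglement monotone `F*` is reversed:
`F*(ρ(χ₀, Λ_p)) > F*(ρ(Φ⁺, Λ_p))`. -/
theorem ordering_reversal (p : ℝ) (hp0 : 0 < p) (hp1 : p < 1) :
    FStar (outer (ketChi0 p)) ≤ FStar (outer phiPlus) ∧
    FStar (ampDamp p (outer phiPlus)) < FStar (ampDamp p (outer (ketChi0 p))) := by
  have r2 : ((√2)⁻¹ : ℝ) ^ 2 = 1 / 2 := by rw [inv_pow, Real.sq_sqrt (by norm_num)]; norm_num
  have hq : (0 : ℝ) < 2 - p := by linarith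
  have ra : √(1 / (2 - p)) ^ 2 = 1 / (2 - p) := Real.sq_sqrt (by positivity)
  have hb0 : 0 ≤ (1 - p) / (2 - p) := div_nonneg (by linarith) hq.le
  have rb : √((1 - p) / (2 - p)) ^ 2 = (1 - p) / (2 - p) := Real.sq_sqrt hb0
  constructor
  · have u : FStar (outer (ketChi0 p)) ≤ 1 := by
      refine FStar_le (fun X hX => bd_pure X hX _ _ ?_) feas_Xs
      rw [ra, rb]; field_simp; ring
    have l := le_FStar (ρ := outer phiPlus) (B := 1)
      (fun X hX => bd_pure X hX _ _ (by rw [r2]; norm_num)) feas_Xs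
    refine u.trans (le_trans (le_of_eq ?_) l)
    rw [phiPlus, tr_pure, r2, ← pow_two, r2]
    norm_num [Xs]
  · set s := √(1 - p) with hs
    have hs0 : 0 < s := Real.sqrt_pos.2 (by linarith)
    have hs2 : s ^ 2 = 1 - p := Real.sq_sqrt (by linarith)
    have hs1 : s < 1 := by nlinarith
    have hab : √(1 / (2 - p)) * √((1 - p) / (2 - p)) * s = (1 - p) / (2 - p) := by
      rw [hs, ← Real.sqrt_mul (by positivity), ← Real.sqrt_mul (by positivity)]
      rw [show 1 / (2 - p) * ((1 - p) / (2 - p)) * (1 - p) = ((1 - p) / (2 - p)) ^ 2 by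
        field_simp]
      exact Real.sqrt_sq hb0
    have l : 1 / 2 + (1 - p) / 2 ≤ FStar (ampDamp p (outer (ketChi0 p))) := by
      have l := le_FStar (ρ := ampDamp p (outer (ketChi0 p)))
        (B := 1 / 2 + (1 - p) / (2 - p)) (fun X hX => by
          refine (bd_damp X hX _ _ p hp0 hp1).trans ?_
          obtain ⟨-, -, -, h4, -, -⟩ := feas_bounds hX
          rw [← hs, hab, rb]
          have := mul_nonneg (mul_nonneg hb0 hp0.le) (sq_nonneg (X (0,1) (1,0)).re)
          nlinarith) feas_Xs
      refine le_trans (le_of_eq ?_) l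
      rw [ketChi0, tr_damp _ _ _ _ hp0 hp1, ← hs, hab, ra, rb]
      norm_num [Xs]
      field_simp
      ring
    set δ := min (s ^ 2 / 2) (min (s ^ 2 * (1 / 4 - ((1 + s) / 4) ^ 2)) ((1 - s) ^ 2 / 16)) with hδ
    have hδ0 : 0 < δ := by
      refine lt_min (by positivity) (lt_min (mul_pos (by positivity) (by nlinarith)) ?_)
      have : 0 < 1 - s := by linarith
      positivity
    have d1 : δ ≤ s ^ 2 / 2 := min_le_left _ _
    have d2 : δ ≤ s ^ 2 * (1 / 4 - ((1 + s) / 4) ^ 2) := (min_le_right _ _).trans (min_le_left _ _)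
    have d3 : δ ≤ (1 - s) ^ 2 / 16 := (min_le_right _ _).trans (min_le_right _ _)
    have u : FStar (ampDamp p (outer phiPlus)) ≤ 1 / 2 + (1 - p) / 2 - δ := by
      refine FStar_le (fun X hX => (bd_damp X hX _ _ p hp0 hp1).trans ?_) feas_Xs
      obtain ⟨-, -, -, h4, -, -⟩ := feas_bounds hX
      rw [← pow_two, r2, ← hs]
      obtain ⟨t, ht⟩ : ∃ t, t = -(X (0,1) (1,0)).re := ⟨_, rfl⟩
      have hx : (X (0,1) (1,0)).re = -t := by linarith
      rw [hx] at h4 ⊢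
      have hp : p = 1 - s ^ 2 := by linarith
      rw [hp]
      have key : δ ≤ (t - s / 2) ^ 2 + s ^ 2 * (1 / 4 - t ^ 2) := by
        rcases le_total t 0 with h | h
        · nlinarith [mul_nonneg hs0.le (neg_nonneg.2 h), mul_nonneg (sq_nonneg t) (by nlinarith : 0 ≤ 1 - s ^ 2)]
        · have ht2 : 0 ≤ s ^ 2 * (1 / 4 - t ^ 2) := mul_nonneg (by positivity) (by nlinarith)
          rcases le_total t ((1 + s) / 4) with h' | h'
          · have : t ^ 2 ≤ ((1 + s) / 4) ^ 2 := pow_le_pow_left₀ h h' 2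
            nlinarith [mul_nonneg (sq_nonneg s) (sub_nonneg.2 this), sq_nonneg (t - s / 2)]
          · have : ((1 - s) / 4) ^ 2 ≤ (t - s / 2) ^ 2 :=
              pow_le_pow_left₀ (by linarith) (by linarith) 2
            nlinarith
      nlinarith
    linarith
end

section
/- Let 0 < p < 1 and let α₁ ≥ β₁ > 0, α₂ ≥ β₂ > 0 with α₁² + β₁² = α₂² + β₂² = 1. If the concurrence of |χ(α₁)⟩ = α₁|00⟩ + β₁|11⟩ is at least that of |χ(α₂)⟩ (i.e., 2α₁β₁ ≥ 2α₂β₂), then after transmission through the amplitude damping channel C(ρ(χ(α₁), Λ_p)) ≥ C(ρ(χ(α₂), Λ_p)); if the pure-state inequality is strict, so is the mixed-state one. In particular C(ρ(Φ⁺, Λ_p)) > C(ρ(χ₀, Λ_p)) for |χ₀⟩ = (1/√(2−p))|00⟩ + √((1−p)/(2−p))|11⟩. -/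
open Matrix Complex
open scoped Kronecker ComplexOrder

/-- The spin-flip product has rank one for the damped state. -/
lemma Rmat_ampDamp (p a b : ℝ) :
    Rmat (ampDamp p (outer (ketChi a b))) =
      vecMulVec
        (ketChi (2 * a * b * Real.sqrt (1 - p) * a)
          (2 * a * b * Real.sqrt (1 - p) * (b * Real.sqrt (1 - p))))
        (ketChi (b * Real.sqrt (1 - p)) a) := by
  have hA : ampDamp p (outer (ketChi a b)) = Matrix.of fun i j : Q2 =>
      ketChi a (b * Real.sqrt (1 - p)) i * ketChi a (b * Real.sqrt (1 - p)) j +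
      (if i = (1, 0) ∧ j = (1, 0) then ((b : ℂ) * Real.sqrt p) ^ 2 else 0) := by
    ext ⟨i, j⟩ ⟨k, l⟩
    fin_cases i <;> fin_cases j <;> fin_cases k <;> fin_cases l <;>
      simp [ampDamp, outer, ketChi, M0, M1, Matrix.mul_apply, Fintype.sum_prod_type,
        Matrix.one_apply] <;> ring
  rw [hA]
  ext ⟨i, j⟩ ⟨k, l⟩
  fin_cases i <;> fin_cases j <;> fin_cases k <;> fin_cases l <;>
    simp [Rmat, ketChi, sigY, Matrix.mul_apply, Fintype.sum_prod_type, vecMulVec_apply] <;> ring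

/-- The concurrence of the damped state is `2ab√(1-p)`. -/
lemma concurrence_value (p a b c : ℝ) (ha : 0 ≤ a) (hb : 0 ≤ b)
    (h : IsConcurrence (ampDamp p (outer (ketChi a b))) c) :
    c = 2 * a * b * Real.sqrt (1 - p) := by
  obtain ⟨lam, hs, hn, hc, rfl⟩ := h
  rw [Rmat_ampDamp, charpoly_vecMulVec] at hc
  set K : ℝ := 2 * a * b * Real.sqrt (1 - p) with hK
  have hK0 : 0 ≤ K := by positivity
  have hev : ∀ t : ℝ, t ^ 4 - K ^ 2 * t ^ 3 =
      (t - lam 0 ^ 2) * (t - lam 1 ^ 2) * (t - lam 2 ^ 2) * (t - lam 3 ^ 2) := by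
    intro t
    have h1 := congrArg (Polynomial.eval (t : ℂ)) hc
    simp [Fin.prod_univ_four, dotProduct, Fintype.sum_prod_type, ketChi] at h1
    have h2 : ((t ^ 4 - K ^ 2 * t ^ 3 : ℝ) : ℂ) =
      (((t - lam 0 ^ 2) * (t - lam 1 ^ 2) * (t - lam 2 ^ 2) * (t - lam 3 ^ 2) : ℝ) : ℂ) := by
      push_cast
      rw [← h1, hK]
      push_cast
      ring
    exact_mod_cast h2
  have e0 := hev 0
  have e1 := hev 1
  have e2 := hev (-1)
  have e3 := hev 2
  have s1 : lam 0 ^ 2 + lam 1 ^ 2 + lam 2 ^ 2 + lam 3 ^ 2 = K ^ 2 := by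
    linarith
  have s2 : lam 0 ^ 2 * lam 1 ^ 2 + lam 0 ^ 2 * lam 2 ^ 2 + lam 0 ^ 2 * lam 3 ^ 2
      + lam 1 ^ 2 * lam 2 ^ 2 + lam 1 ^ 2 * lam 3 ^ 2 + lam 2 ^ 2 * lam 3 ^ 2 = 0 := by
    linarith
  have h01 : lam 0 ^ 2 * lam 1 ^ 2 = 0 := by
    have : 0 ≤ lam 0 ^ 2 * lam 1 ^ 2 := by positivity
    have : 0 ≤ lam 0 ^ 2 * lam 2 ^ 2 := by positivity
    have : 0 ≤ lam 0 ^ 2 * lam 3 ^ 2 := by positivity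
    have : 0 ≤ lam 1 ^ 2 * lam 2 ^ 2 := by positivity
    have : 0 ≤ lam 1 ^ 2 * lam 3 ^ 2 := by positivity
    have : 0 ≤ lam 2 ^ 2 * lam 3 ^ 2 := by positivity
    linarith
  have l01 := hs 0 1 (by decide)
  have l12 := hs 1 2 (by decide)
  have l23 := hs 2 3 (by decide)
  have z1 : lam 1 = 0 := by
    rcases mul_eq_zero.mp h01 with h | h
    · have h0 : lam 0 = 0 := by simpa using h
      linarith [hn 1]
    · simpa using h
  have z2 : lam 2 = 0 := by linarith [hn 2]
  have z3 : lam 3 = 0 := by linarith [hn 3]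
  rw [z1, z2, z3] at s1 ⊢
  have : lam 0 ^ 2 = K ^ 2 := by linarith
  have h0 : lam 0 = K := (sq_eq_sq₀ (hn 0) hK0).mp this
  rw [h0]
  simpa using hK0

/-- For `0 < p < 1`, the ordering of transmitted pure states under
concurrence is preserved by the amplitude damping channel: if `2α₁β₁ ≥ 2α₂β₂` then
`C(ρ(χ(α₁), Λ_p)) ≥ C(ρ(χ(α₂), Λ_p))`, strictly if the former is strict. In
particular `C(ρ(Φ⁺, Λ_p)) > C(ρ(χ₀, Λ_p))`. -/
theorem concurrence_ordering_preserved (p : ℝ) (hp0 : 0 < p) (hp1 : p < 1) :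
    (∀ α₁ β₁ α₂ β₂ : ℝ, β₁ ≤ α₁ → 0 < β₁ → β₂ ≤ α₂ → 0 < β₂ →
      α₁ ^ 2 + β₁ ^ 2 = 1 → α₂ ^ 2 + β₂ ^ 2 = 1 →
      ∀ c₁ c₂ : ℝ,
        IsConcurrence (ampDamp p (outer (ketChi α₁ β₁))) c₁ →
        IsConcurrence (ampDamp p (outer (ketChi α₂ β₂))) c₂ →
        (2 * α₂ * β₂ ≤ 2 * α₁ * β₁ → c₂ ≤ c₁) ∧
        (2 * α₂ * β₂ < 2 * α₁ * β₁ → c₂ < c₁)) ∧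
    (∀ c₁ c₂ : ℝ,
      IsConcurrence (ampDamp p (outer phiPlus)) c₁ →
      IsConcurrence (ampDamp p (outer (ketChi0 p))) c₂ →
      c₂ < c₁) := by
  have hs : 0 < Real.sqrt (1 - p) := Real.sqrt_pos.mpr (by linarith)
  refine ⟨?_, ?_⟩
  · intro α₁ β₁ α₂ β₂ h1 hb1 h2 hb2 _ _ c₁ c₂ hc1 hc2
    rw [concurrence_value p α₁ β₁ c₁ (by linarith) hb1.le hc1,
      concurrence_value p α₂ β₂ c₂ (by linarith) hb2.le hc2]
    exact ⟨fun h => mul_le_mul_of_nonneg_right h hs.le, fun h => mul_lt_mul_of_pos_right h hs⟩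
  · intro c₁ c₂ hc1 hc2
    rw [concurrence_value p _ _ c₁ (by positivity) (by positivity) hc1,
      concurrence_value p _ _ c₂ (Real.sqrt_nonneg _) (Real.sqrt_nonneg _) hc2]
    refine mul_lt_mul_of_pos_right ?_ hs
    have h2 : 2 * (Real.sqrt 2)⁻¹ * (Real.sqrt 2)⁻¹ = 1 := by
      rw [mul_assoc, ← mul_inv, Real.mul_self_sqrt (by norm_num)]
      norm_num
    rw [h2]
    have hp2 : 0 < 2 - p := by linarith
    have ha := Real.sq_sqrt (show 0 ≤ 1 / (2 - p) by positivity)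
    have hb := Real.sq_sqrt (show 0 ≤ (1 - p) / (2 - p) from div_nonneg (by linarith) hp2.le)
    have hlt : Real.sqrt ((1 - p) / (2 - p)) < Real.sqrt (1 / (2 - p)) := by
      apply Real.sqrt_lt_sqrt (div_nonneg (by linarith) hp2.le)
      exact div_lt_div_of_pos_right (by linarith) hp2
    have hsum : 1 / (2 - p) + (1 - p) / (2 - p) = 1 := by
      field_simp
      ring
    nlinarith [mul_pos (sub_pos.mpr hlt) (sub_pos.mpr hlt)]
end

section
/- For p ∈ (0,1), the concurrence of the optimal transmitted state |χ₀⟩ = (1/√(2−p))|00⟩ + √((1−p)/(2−p))|11⟩ equals C(χ₀) = 2√(1−p)/(2−p); moreover, the function p ↦ 2√(1−p)/(2−p) is strictly decreasing on (0,1) and tends to 0 as p → 1⁻. In particular, for a very noisy channel the optimal fidelity 1 − p/2 is attained by transmitting a state of vanishingly small entanglement. -/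
/-- For `p ∈ (0,1)`, the concurrence of `|χ₀⟩` equals `2√(1−p)/(2−p)`;
moreover `p ↦ 2√(1−p)/(2−p)` is strictly decreasing on `(0,1)` and tends to `0` as
`p → 1⁻`. -/
theorem concurrence_chi0 (p : ℝ) (hp0 : 0 < p) (hp1 : p < 1) :
    2 * Real.sqrt (1 / (2 - p)) * Real.sqrt ((1 - p) / (2 - p)) =
      2 * Real.sqrt (1 - p) / (2 - p) ∧
    StrictAntiOn (fun q : ℝ => 2 * Real.sqrt (1 - q) / (2 - q)) (Set.Ioo 0 1) ∧
    Filter.Tendsto (fun q : ℝ => 2 * Real.sqrt (1 - q) / (2 - q))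
      (nhdsWithin 1 (Set.Iio 1)) (nhds 0) := by
  refine ⟨?_, ?_, ?_⟩
  · have h2 : 0 < 2 - p := by linarith
    have h1 : 0 ≤ 1 - p := by linarith
    rw [mul_assoc, ← Real.sqrt_mul (by positivity)]
    have : 1 / (2 - p) * ((1 - p) / (2 - p)) = (1 - p) / (2 - p) ^ 2 := by
      field_simp
    rw [this, Real.sqrt_div h1, Real.sqrt_sq h2.le, mul_div_assoc]
  · rintro a ⟨ha0, ha1⟩ b ⟨hb0, hb1⟩ hab
    have hst : Real.sqrt (1 - b) < Real.sqrt (1 - a) :=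
      Real.sqrt_lt_sqrt (by linarith) (by linarith)
    have ht : 0 < Real.sqrt (1 - b) := Real.sqrt_pos.2 (by linarith)
    have hs1 : Real.sqrt (1 - a) < 1 := by
      rw [Real.sqrt_lt' one_pos]; linarith
    have hs2 := Real.sq_sqrt (show 0 ≤ 1 - a by linarith)
    have ht2 := Real.sq_sqrt (show 0 ≤ 1 - b by linarith)
    show 2 * Real.sqrt (1 - b) / (2 - b) < 2 * Real.sqrt (1 - a) / (2 - a)
    rw [div_lt_div_iff₀ (by linarith) (by linarith)]
    generalize Real.sqrt (1 - a) = s at *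
    generalize Real.sqrt (1 - b) = t at *
    have ea : a = 1 - s ^ 2 := by linarith
    have eb : b = 1 - t ^ 2 := by linarith
    subst ea eb
    have h : s * t < 1 := by nlinarith
    nlinarith [mul_pos (sub_pos.2 hst) (sub_pos.2 h)]
  · have hc : ContinuousAt (fun q : ℝ => 2 * Real.sqrt (1 - q) / (2 - q)) 1 := by
      apply ContinuousAt.div
      · fun_prop
      · fun_prop
      · norm_num
    have h := hc.tendsto
    simp only [sub_self, Real.sqrt_zero, mul_zero, zero_div] at h
    exact h.mono_left nhdsWithin_le_nhds
end
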